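/- Let X = (0,1)^d be the open unit cube in ℝ^d with closure X̄ = [0,1]^d and boundary ∂X. Let π : X̄ → ℝ be continuously differentiable with π > 0 on X and ∫_{X̄} π dλ = 1 (λ = Lebesgue measure), and let φ : X̄ → ℝ^d be continuously differentiable with π(x) φ(x) = 0 for every x ∈ ∂X. Then ∫_X [∇·φ(x) + φ(x)·∇ log π(x)] π(x) dx = 0. -/

import Mathlib

open MeasureTheory Set

/-!
On the cube `π · S_π[φ] = ∇·(π φ)`, so by the divergence theorem the integral is the flux of `π φ`
through the boundary. Only the component of `π φ` normal to each face enters this flux, so it is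
enough that these components vanish.
-/

section PiDivergence

variable {ι E : Type*} [Fintype ι] [DecidableEq ι] [NormedAddCommGroup E] [NormedSpace ℝ E]
  {a b : ι → ℝ} {f : (ι → ℝ) → ι → E}

theorem integral_Icc_divergence_eq_zero {f' : (ι → ℝ) → (ι → ℝ) →L[ℝ] (ι → E)}
    (hcont : ContinuousOn f (Icc a b))
    (hderiv : ∀ x ∈ interior (Icc a b), HasFDerivAt f (f' x) x)
    (hintegrable : IntegrableOn (fun x => ∑ i, f' x (Pi.single i 1) i) (Icc a b))
    (hnormal : ∀ x ∈ Icc a b, ∀ i, x i ∉ Ioo (a i) (b i) → f x i = 0) :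
    ∫ x in Icc a b, ∑ i, f' x (Pi.single i 1) i = 0 := by
  by_cases hab : a ≤ b
  swap; · simp [Icc_eq_empty hab]
  cases isEmpty_or_nonempty ι
  · simp
  -- Mathlib states the divergence theorem for coordinates indexed by `Fin (n + 1)`.
  obtain ⟨n, hn⟩ := Nat.exists_eq_succ_of_ne_zero (Fintype.card_ne_zero (α := ι))
  let e := Fintype.equivFinOfCardEq hn
  let L : (ι → ℝ) ≃L[ℝ] (Fin (n + 1) → ℝ) :=
    (LinearEquiv.funCongrLeft ℝ ℝ e.symm).toContinuousLinearEquiv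
  have hL (x : ι → ℝ) (j : Fin (n + 1)) : L x j = x (e.symm j) := rfl
  have hLsymm (y : Fin (n + 1) → ℝ) (i : ι) : L.symm y i = y (e i) := rfl
  have hL_le (x y : ι → ℝ) : L x ≤ L y ↔ x ≤ y := by
    simp [Pi.le_def, hL, e.forall_congr_left]
  have hLsingle (j : Fin (n + 1)) : L.symm (Pi.single j 1) = Pi.single (e.symm j) 1 := by
    ext i
    simp [hLsymm, Pi.single_apply, Equiv.eq_symm_apply]
  have hface (j : Fin (n + 1)) (c : ℝ) (hc : c = L a j ∨ c = L b j) :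
      ∫ z in Icc (L a ∘ j.succAbove) (L b ∘ j.succAbove),
        f (L.symm (j.insertNth c z)) (e.symm j) = 0 := by
    refine setIntegral_eq_zero_of_forall_eq_zero fun z hz => hnormal _ ?_ _ ?_
    · have hc_mem : c ∈ Icc (L a j) (L b j) := by
        rcases hc with rfl | rfl
        exacts [left_mem_Icc.2 (hab _), right_mem_Icc.2 (hab _)]
      simpa [← hL_le] using Fin.insertNth_mem_Icc.2 ⟨hc_mem, hz⟩
    · rcases hc with rfl | rfl <;> simp [hL, hLsymm]
  rw [integral_divergence_of_hasFDerivAt_off_countable_of_equiv L hL_le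
    ((volume_measurePreserving_piCongrLeft (fun _ => ℝ) e.symm).symm _)
    (fun j x => f x (e.symm j)) (fun j x => .comp (.proj (e.symm j)) (f' x)) ∅ countable_empty
    a b hab (fun _ => (continuous_apply _).comp_continuousOn hcont)
    (fun x hx _ => hasFDerivAt_pi'.1 (hderiv x hx.1) _) _ (fun x => ?_) hintegrable]
  · simp [hface]
  · simpa [hLsingle] using (e.symm.sum_comp fun i => f' x (Pi.single i 1) i).symm

theorem integral_pi_Ioo_divergence_eq_zero
    (hcont : ContinuousOn f (Icc a b))
    (hdiff : DifferentiableOn ℝ f (univ.pi fun i => Ioo (a i) (b i)))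
    (hintegrable : IntegrableOn (fun x => ∑ i, fderiv ℝ f x (Pi.single i 1) i)
      (univ.pi fun i => Ioo (a i) (b i)))
    (hnormal : ∀ x ∈ Icc a b, ∀ i, x i ∉ Ioo (a i) (b i) → f x i = 0) :
    ∫ x in univ.pi fun i => Ioo (a i) (b i), ∑ i, fderiv ℝ f x (Pi.single i 1) i = 0 := by
  have hae : (univ.pi fun i => Ioo (a i) (b i)) =ᵐ[volume] Icc a b :=
    Measure.univ_pi_Ioo_ae_eq_Icc
  have hinterior : interior (Icc a b) = univ.pi fun i => Ioo (a i) (b i) := by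
    simp only [← pi_univ_Icc, interior_pi_set finite_univ, interior_Icc]
  rw [setIntegral_congr_set hae]
  refine integral_Icc_divergence_eq_zero hcont (fun x hx => ?_)
    (hintegrable.congr_set_ae hae.symm) hnormal
  exact hdiff.hasFDerivAt (hinterior ▸ isOpen_interior.mem_nhds hx)

end PiDivergence

section Divergence

variable {ι : Type*} [Fintype ι] [DecidableEq ι]

/-- The divergence `∇·F = ∑ᵢ ∂Fᵢ/∂xᵢ` of a vector field on Euclidean space, with value `0` at points
where `F` is not differentiable. -/
noncomputable def divergence (F : EuclideanSpace ℝ ι → EuclideanSpace ℝ ι)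
    (x : EuclideanSpace ℝ ι) : ℝ :=
  ∑ i, fderiv ℝ F x (EuclideanSpace.single i 1) i

theorem divergence_smul {π : EuclideanSpace ℝ ι → ℝ} {φ : EuclideanSpace ℝ ι → EuclideanSpace ℝ ι}
    {x : EuclideanSpace ℝ ι} (hπ : DifferentiableAt ℝ π x) (hφ : DifferentiableAt ℝ φ x) :
    divergence (fun y => π y • φ y) x = π x * divergence φ x + fderiv ℝ π x (φ x) := by
  have hφ_coord : φ x = ∑ i, φ x i • EuclideanSpace.single i (1 : ℝ) := by
    simpa using ((EuclideanSpace.basisFun ι ℝ).sum_repr (φ x)).symm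
  have hgrad : fderiv ℝ π x (φ x) = ∑ i, fderiv ℝ π x (EuclideanSpace.single i 1) * φ x i := by
    conv_lhs => rw [hφ_coord]
    simp [mul_comm]
  simp [divergence, fderiv_fun_smul hπ hφ, hgrad, Finset.sum_add_distrib, Finset.mul_sum]

theorem integrableOn_divergence {F : EuclideanSpace ℝ ι → EuclideanSpace ℝ ι}
    {s : Set (EuclideanSpace ℝ ι)} (hs : IsOpen s) (hbdd : Bornology.IsBounded s)
    (huniq : UniqueDiffOn ℝ (closure s)) (hF : ContDiffOn ℝ 1 F (closure s)) :
    IntegrableOn (divergence F) s := by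
  have hcont : ContinuousOn
      (fun x => ∑ i, fderivWithin ℝ F (closure s) x (EuclideanSpace.single i 1) i) (closure s) :=
    continuousOn_finsetSum _ fun i _ => (EuclideanSpace.proj i).continuous.comp_continuousOn
      ((hF.continuousOn_fderivWithin huniq le_rfl).clm_apply continuousOn_const)
  refine ((hcont.integrableOn_compact hbdd.isCompact_closure).mono_set subset_closure).congr_fun
    (fun x hx => ?_) hs.measurableSet
  have hnhds : closure s ∈ nhds x := Filter.mem_of_superset (hs.mem_nhds hx) subset_closure
  simp only [divergence, fderivWithin_of_mem_nhds hnhds]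

end Divergence

section OpenBox

variable {ι : Type*}

/-- The open box `∏ᵢ (aᵢ, bᵢ)` in Euclidean space; it is empty unless `aᵢ < bᵢ` for all `i`. -/
def openBox (a b : ι → ℝ) : Set (EuclideanSpace ℝ ι) :=
  {x | ∀ i, x i ∈ Ioo (a i) (b i)}

variable {a b : ι → ℝ}

theorem openBox_eq_preimage :
    openBox a b = EuclideanSpace.equiv ι ℝ ⁻¹' univ.pi fun i => Ioo (a i) (b i) := by
  ext x
  simp [openBox]

theorem convex_openBox : Convex ℝ (openBox a b) := by
  rw [openBox_eq_preimage]
  exact (convex_pi fun i _ => convex_Ioo (a i) (b i)).linear_preimage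
    (EuclideanSpace.equiv ι ℝ).toLinearEquiv.toLinearMap

theorem closure_openBox (h : (openBox a b).Nonempty) :
    closure (openBox a b) = EuclideanSpace.equiv ι ℝ ⁻¹' Icc a b := by
  obtain ⟨x, hx⟩ := h
  have hne (i : ι) : a i ≠ b i := ((hx i).1.trans (hx i).2).ne
  have hpreimage := (EuclideanSpace.equiv ι ℝ).toHomeomorph.preimage_closure
    (univ.pi fun i => Ioo (a i) (b i))
  simp only [closure_pi_set, closure_Ioo (hne _), pi_univ_Icc] at hpreimage
  rw [openBox_eq_preimage]
  exact hpreimage.symm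

theorem isOpen_openBox [Finite ι] : IsOpen (openBox a b) := by
  rw [openBox_eq_preimage]
  exact (isOpen_set_pi finite_univ fun _ _ => isOpen_Ioo).preimage
    (EuclideanSpace.equiv ι ℝ).continuous

theorem isBounded_openBox [Finite ι] : Bornology.IsBounded (openBox a b) := by
  have := Fintype.ofFinite ι
  rw [openBox_eq_preimage]
  exact (EuclideanSpace.equiv ι ℝ).antilipschitz.isBounded_preimage
    (.pi fun i => Metric.isBounded_Ioo (a i) (b i))

theorem uniqueDiffOn_closure_openBox [Finite ι] : UniqueDiffOn ℝ (closure (openBox a b)) := by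
  have := Fintype.ofFinite ι
  rcases (openBox a b).eq_empty_or_nonempty with hempty | hne
  · simp [hempty, uniqueDiffOn_empty]
  · exact uniqueDiffOn_convex convex_openBox.closure
      (hne.mono (interior_maximal subset_closure isOpen_openBox))

theorem integral_openBox_divergence_eq_zero [Fintype ι] [DecidableEq ι]
    {F : EuclideanSpace ℝ ι → EuclideanSpace ℝ ι}
    (hcont : ContinuousOn F (closure (openBox a b))) (hdiff : DifferentiableOn ℝ F (openBox a b))
    (hintegrable : IntegrableOn (divergence F) (openBox a b))
    (hnormal : ∀ x ∈ frontier (openBox a b), ∀ i, x i ∉ Ioo (a i) (b i) → F x i = 0) :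
    ∫ x in openBox a b, divergence F x = 0 := by
  rcases (openBox a b).eq_empty_or_nonempty with hempty | hne
  · simp [hempty]
  let L := EuclideanSpace.equiv ι ℝ
  have hmp : MeasurePreserving L := PiLp.volume_preserving_ofLp ι
  have hemb : MeasurableEmbedding L := L.toHomeomorph.measurableEmbedding
  let f : (ι → ℝ) → ι → ℝ := L ∘ F ∘ L.symm
  have hmaps_closure : MapsTo L.symm (Icc a b) (closure (openBox a b)) :=
    fun y hy => (closure_openBox hne).ge hy
  have hmaps : MapsTo L.symm (univ.pi fun i => Ioo (a i) (b i)) (openBox a b) :=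
    fun y hy i => hy i (mem_univ i)
  have hdiv (x : EuclideanSpace ℝ ι) :
      divergence F x = ∑ i, fderiv ℝ f (L x) (Pi.single i 1) i := by
    have hf : fderiv ℝ f (L x) = L ∘L fderiv ℝ F x ∘L (L.symm : (ι → ℝ) →L[ℝ] _) := by
      simp [f, L.comp_fderiv, L.symm.comp_right_fderiv]
    rw [hf]
    rfl
  simp only [funext hdiv, openBox_eq_preimage] at hintegrable ⊢
  rw [hmp.setIntegral_preimage_emb hemb fun y => ∑ i, fderiv ℝ f y (Pi.single i 1) i]
  refine integral_pi_Ioo_divergence_eq_zero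
    (L.continuous.comp_continuousOn (hcont.comp L.symm.continuous.continuousOn hmaps_closure))
    (L.differentiable.comp_differentiableOn
      (hdiff.comp L.symm.differentiable.differentiableOn hmaps))
    ((hmp.integrableOn_comp_preimage hemb).1 hintegrable) fun y hy i hi => ?_
  exact hnormal _ ⟨hmaps_closure hy, fun hy_int => hi (interior_subset hy_int i)⟩ i hi

end OpenBox

section SteinOperator

variable {ι : Type*} [Fintype ι] [DecidableEq ι] {π : EuclideanSpace ℝ ι → ℝ}
  {φ : EuclideanSpace ℝ ι → EuclideanSpace ℝ ι}

/-- The Stein operator `S_π[φ] = ∇·φ + φ·∇ log π`, where `φ·∇ log π` is encoded as the derivative of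
`log π` in the direction `φ`. -/
noncomputable def steinOperator (π : EuclideanSpace ℝ ι → ℝ)
    (φ : EuclideanSpace ℝ ι → EuclideanSpace ℝ ι) (x : EuclideanSpace ℝ ι) : ℝ :=
  divergence φ x + fderiv ℝ (fun y => Real.log (π y)) x (φ x)

theorem steinOperator_mul_eq_divergence_smul {x : EuclideanSpace ℝ ι}
    (hπ : DifferentiableAt ℝ π x) (hφ : DifferentiableAt ℝ φ x) (hπ0 : π x ≠ 0) :
    steinOperator π φ x * π x = divergence (fun y => π y • φ y) x := by
  rw [divergence_smul hπ hφ, steinOperator, fderiv.log hπ hπ0]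
  simp only [smul_apply, smul_eq_mul]
  field_simp

theorem stein_operator_integrates_to_zero_cube_general (a b : ι → ℝ)
    (hπ : ContDiffOn ℝ 1 π (closure (openBox a b))) (hπpos : ∀ x ∈ openBox a b, 0 < π x)
    (hφ : ContDiffOn ℝ 1 φ (closure (openBox a b)))
    (hnormal : ∀ x ∈ frontier (openBox a b), ∀ i, x i ∉ Ioo (a i) (b i) → π x * φ x i = 0) :
    ∫ x in openBox a b, steinOperator π φ x * π x = 0 := by
  have hF : ContDiffOn ℝ 1 (fun x => π x • φ x) (closure (openBox a b)) := hπ.smul hφ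
  have hnhds {x} (hx : x ∈ openBox a b) : closure (openBox a b) ∈ nhds x :=
    Filter.mem_of_superset (isOpen_openBox.mem_nhds hx) subset_closure
  calc
    ∫ x in openBox a b, steinOperator π φ x * π x
        = ∫ x in openBox a b, divergence (fun y => π y • φ y) x :=
      setIntegral_congr_fun isOpen_openBox.measurableSet fun x hx =>
        steinOperator_mul_eq_divergence_smul
          ((hπ.contDiffAt (hnhds hx)).differentiableAt one_ne_zero)
          ((hφ.contDiffAt (hnhds hx)).differentiableAt one_ne_zero) (hπpos x hx).ne'
    _ = 0 := integral_openBox_divergence_eq_zero hF.continuousOn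
      ((hF.differentiableOn one_ne_zero).mono subset_closure)
      (integrableOn_divergence isOpen_openBox isBounded_openBox uniqueDiffOn_closure_openBox hF)
      hnormal

end SteinOperator

/-- **Stein's identity on the unit cube.**
Let `X = (0,1)^d` with closure `[0,1]^d`.  If `π` is `C¹` on the closed cube, positive on the
open cube, integrates to one, and `φ` is a `C¹` vector field with `π x • φ x = 0` on the
boundary of the cube, then the Stein operator
`S_π[φ](x) = ∇·φ(x) + φ(x)·∇ log π(x)` integrates to zero against the density `π`. -/
theorem stein_operator_integrates_to_zero_cube
    (d : ℕ) (hd : 0 < d)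
    (X : Set (EuclideanSpace ℝ (Fin d)))
    (hX : X = {x : EuclideanSpace ℝ (Fin d) | ∀ i, x i ∈ Set.Ioo (0 : ℝ) 1})
    (π : EuclideanSpace ℝ (Fin d) → ℝ)
    (φ : EuclideanSpace ℝ (Fin d) → EuclideanSpace ℝ (Fin d))
    (hπ : ContDiffOn ℝ 1 π (closure X))
    (hπpos : ∀ x ∈ X, 0 < π x)
    (hπint : ∫ x in closure X, π x = 1)
    (hφ : ContDiffOn ℝ 1 φ (closure X))
    (hbound : ∀ x ∈ frontier X, π x • φ x = 0) :
    ∫ x in X,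
      ((∑ i, fderiv ℝ φ x (EuclideanSpace.single i 1) i) +
        fderiv ℝ (fun y => Real.log (π y)) x (φ x)) * π x = 0 := by
  subst hX
  exact stein_operator_integrates_to_zero_cube_general 0 1 hπ hπpos hφ
    fun x hx i _ => congrArg (· i) (hbound x hx)
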